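/- Fix τ ∈ σ_q and let 𝒩_q^τ = {U ∈ 𝒩_q : UτU† = ±τ}. Suppose W^τ ⊆ V^τ satisfies φ⊗²(U)W^τ ⊆ W^τ for all U ∈ 𝒩_q^τ. Then: (i) whenever U₁, U₂ ∈ 𝒩_q satisfy U₁τU₁† = ±U₂τU₂†, one has φ⊗²(U₁)W^τ = φ⊗²(U₂)W^τ; (ii) for every τ′ ∈ σ_q there exists U ∈ 𝒩_q with UτU† = ±τ′, and the subspace W^{τ′} := φ⊗²(U)W^τ ⊆ V^{τ′} is independent of the choice of such U; (iii) the subspace W := ⊕_{τ′∈σ_q} W^{τ′} satisfies φ⊗²(U)W ⊆ W for all U ∈ 𝒩_q. -/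

import Mathlib

open Matrix MeasureTheory
open scoped Kronecker

noncomputable section

namespace CliffordPaper

/-- The single-qubit Pauli matrices `1, X, Y, Z`. -/
def pauli1 : Fin 4 → Matrix (Fin 2) (Fin 2) ℂ :=
  ![1, !![0, 1; 1, 0], !![0, -Complex.I; Complex.I, 0], !![1, 0; 0, -1]]

/-- Index type for the computational basis of `q` qubits. -/
abbrev Idx (q : ℕ) := Fin q → Fin 2

/-- The space `M_d` of `d × d` complex matrices, `d = 2^q`. -/
abbrev Mat (q : ℕ) := Matrix (Idx q) (Idx q) ℂ

/-- The space `M_d ⊗ M_d`, realized as matrices indexed by the product index set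
(the tensor factors combine via the Kronecker product `⊗ₖ`). -/
abbrev BMat (q : ℕ) := Matrix (Idx q × Idx q) (Idx q × Idx q) ℂ

/-- The `q`-fold Kronecker product of single-qubit Paulis with labels `a`. -/
def PauliOp {q : ℕ} (a : Fin q → Fin 4) : Mat q :=
  Matrix.of fun x y => ∏ i, pauli1 (a i) (x i) (y i)

/-- `√d` as a complex number, where `d = 2^q`. -/
def sqrtd (q : ℕ) : ℂ := (Real.sqrt (2 ^ q) : ℝ)

/-- The set `σ̂_q` of normalized Pauli operators. -/
def sigmaHat (q : ℕ) : Set (Mat q) :=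
  {M | ∃ a : Fin q → Fin 4, M = (sqrtd q)⁻¹ • PauliOp a}

/-- The normalized identity `σ₀ = 1/√d`. -/
def sigma0 (q : ℕ) : Mat q := (sqrtd q)⁻¹ • (1 : Mat q)

/-- `σ_q = σ̂_q \ {σ₀}`. -/
def sigmaSet (q : ℕ) : Set (Mat q) := sigmaHat q \ {sigma0 q}

/-- `N_τ`: the normalized nonidentity Paulis anticommuting with `τ`. -/
def NSet {q : ℕ} (τ : Mat q) : Set (Mat q) :=
  {σ | σ ∈ sigmaSet q ∧ σ * τ + τ * σ = 0}

/-- `C_τ`: the normalized nonidentity Paulis distinct from `τ` commuting with `τ`. -/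
def CSet {q : ℕ} (τ : Mat q) : Set (Mat q) :=
  {σ | σ ∈ sigmaSet q ∧ σ ≠ τ ∧ σ * τ = τ * σ}

/-- `Ĉ_τ`: the normalized Paulis commuting with `τ`. -/
def CHatSet {q : ℕ} (τ : Mat q) : Set (Mat q) :=
  {σ | σ ∈ sigmaHat q ∧ σ * τ = τ * σ}

/-- The normalized product `σ·τ = √d στ`. -/
def nprod {q : ℕ} (σ τ : Mat q) : Mat q := sqrtd q • (σ * τ)

/-- The Clifford normalizer `𝒩_q`: unitaries mapping normalized Paulis to
signed normalized Paulis under conjugation. -/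
def Cliff (q : ℕ) : Set (Mat q) :=
  {U | U ∈ Matrix.unitaryGroup (Idx q) ℂ ∧
    ∀ σ ∈ sigmaHat q, ∃ τ ∈ sigmaHat q, U * σ * Uᴴ = τ ∨ U * σ * Uᴴ = -τ}

/-- The two-copy representation `φ⊗²(U) : A ⊗ B ↦ (UAU†) ⊗ (UBU†)`, extended linearly. -/
def twoCopy {q : ℕ} (U : Mat q) : BMat q →ₗ[ℂ] BMat q where
  toFun M := (U ⊗ₖ U) * M * (U ⊗ₖ U)ᴴ
  map_add' M N := by
    show (U ⊗ₖ U) * (M + N) * (U ⊗ₖ U)ᴴ = (U ⊗ₖ U) * M * (U ⊗ₖ U)ᴴ + (U ⊗ₖ U) * N * (U ⊗ₖ U)ᴴ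
    rw [Matrix.mul_add, Matrix.add_mul]
  map_smul' c M := by
    show (U ⊗ₖ U) * (c • M) * (U ⊗ₖ U)ᴴ = c • ((U ⊗ₖ U) * M * (U ⊗ₖ U)ᴴ)
    rw [Matrix.mul_smul, Matrix.smul_mul]

/-- The Hilbert–Schmidt inner product `⟨A, B⟩ = tr(A† B)`. -/
def hs {q : ℕ} (A B : BMat q) : ℂ := (Aᴴ * B).trace

/-- A subspace is invariant under the two-copy representation of `𝒩_q`. -/
def IsInvariant (q : ℕ) (W : Submodule ℂ (BMat q)) : Prop :=
  ∀ U ∈ Cliff q, ∀ v ∈ W, twoCopy U v ∈ W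

/-- A nonzero invariant subspace carries an irreducible subrepresentation. -/
def CarriesIrred (q : ℕ) (W : Submodule ℂ (BMat q)) : Prop :=
  W ≠ ⊥ ∧ IsInvariant q W ∧ ∀ W' ≤ W, IsInvariant q W' → W' = ⊥ ∨ W' = W

/-- Two invariant subspaces carry equivalent subrepresentations: there is a linear
isomorphism between them intertwining the two-copy representation. -/
def EquivRep (q : ℕ) (W W' : Submodule ℂ (BMat q)) : Prop :=
  ∃ T : BMat q →ₗ[ℂ] BMat q, Submodule.map T W = W' ∧
    (∀ x ∈ W, T x = 0 → x = 0) ∧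
    ∀ U ∈ Cliff q, ∀ x ∈ W, T (twoCopy U x) = twoCopy U (T x)

/-- `S_{σ,τ} = (σ⊗τ + τ⊗σ)/√2`. -/
def SVec {q : ℕ} (σ τ : Mat q) : BMat q :=
  ((Real.sqrt 2 : ℂ))⁻¹ • (σ ⊗ₖ τ + τ ⊗ₖ σ)

/-- `A_{σ,τ} = (σ⊗τ − τ⊗σ)/√2`. -/
def AVec {q : ℕ} (σ τ : Mat q) : BMat q :=
  ((Real.sqrt 2 : ℂ))⁻¹ • (σ ⊗ₖ τ - τ ⊗ₖ σ)

/-- The trivial sector `V_id`. -/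
def Vid (q : ℕ) : Submodule ℂ (BMat q) :=
  Submodule.span ℂ {sigma0 q ⊗ₖ sigma0 q}

/-- The right adjoint sector `V_r`. -/
def Vr (q : ℕ) : Submodule ℂ (BMat q) :=
  Submodule.span ℂ {M | ∃ τ ∈ sigmaSet q, M = sigma0 q ⊗ₖ τ}

/-- The left adjoint sector `V_l`. -/
def Vl (q : ℕ) : Submodule ℂ (BMat q) :=
  Submodule.span ℂ {M | ∃ τ ∈ sigmaSet q, M = τ ⊗ₖ sigma0 q}

/-- The diagonal sector `V_d`. -/
def Vdiag (q : ℕ) : Submodule ℂ (BMat q) :=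
  Submodule.span ℂ {M | ∃ τ ∈ sigmaSet q, M = τ ⊗ₖ τ}

/-- The symmetric commuting sector `V_[S]`. -/
def VScom (q : ℕ) : Submodule ℂ (BMat q) :=
  Submodule.span ℂ {M | ∃ τ ∈ sigmaSet q, ∃ σ ∈ CSet τ, M = SVec σ τ}

/-- The symmetric anti-commuting sector `V_{S}`. -/
def VSanti (q : ℕ) : Submodule ℂ (BMat q) :=
  Submodule.span ℂ {M | ∃ τ ∈ sigmaSet q, ∃ σ ∈ NSet τ, M = SVec σ τ}

/-- The antisymmetric commuting sector `V_[A]`. -/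
def VAcom (q : ℕ) : Submodule ℂ (BMat q) :=
  Submodule.span ℂ {M | ∃ τ ∈ sigmaSet q, ∃ σ ∈ CSet τ, M = AVec σ τ}

/-- The antisymmetric anti-commuting sector `V_{A}`. -/
def VAanti (q : ℕ) : Submodule ℂ (BMat q) :=
  Submodule.span ℂ {M | ∃ τ ∈ sigmaSet q, ∃ σ ∈ NSet τ, M = AVec σ τ}

/-- `V_[A]` presented with the spanning vectors `A_{σ,σ·τ}`, `σ ∈ C_τ`. -/
def VAcom' (q : ℕ) : Submodule ℂ (BMat q) :=
  Submodule.span ℂ {M | ∃ τ ∈ sigmaSet q, ∃ σ ∈ CSet τ, M = AVec σ (nprod σ τ)}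

/-- `V_0 = span{Σ_{σ∈σ_q} σ⊗σ}`. -/
def V0diag (q : ℕ) : Submodule ℂ (BMat q) :=
  Submodule.span ℂ {∑ᶠ σ ∈ sigmaSet q, σ ⊗ₖ σ}

/-- `V_1`, the "positive" part of the diagonal sector. -/
def V1diag (q : ℕ) : Submodule ℂ (BMat q) :=
  Submodule.span ℂ {v | ∃ lam : Mat q → ℂ,
    v = ∑ᶠ σ ∈ sigmaSet q, lam σ • (σ ⊗ₖ σ) ∧
    (∑ᶠ σ ∈ sigmaSet q, lam σ) = 0 ∧
    ∀ τ ∈ sigmaSet q, (∑ᶠ σ ∈ NSet τ, lam σ) = -((2 ^ q : ℂ) / 2) * lam τ}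

/-- `V_2`, the "negative" part of the diagonal sector. -/
def V2diag (q : ℕ) : Submodule ℂ (BMat q) :=
  Submodule.span ℂ {v | ∃ lam : Mat q → ℂ,
    v = ∑ᶠ σ ∈ sigmaSet q, lam σ • (σ ⊗ₖ σ) ∧
    (∑ᶠ σ ∈ sigmaSet q, lam σ) = 0 ∧
    ∀ τ ∈ sigmaSet q, (∑ᶠ σ ∈ NSet τ, lam σ) = ((2 ^ q : ℂ) / 2) * lam τ}

/-- `v^[adj]_τ = (2|C_τ|)^{-1/2} Σ_{σ∈C_τ} S_{σ,σ·τ}`. -/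
def vadjS {q : ℕ} (τ : Mat q) : BMat q :=
  ((Real.sqrt (2 * ((CSet τ).ncard : ℝ)) : ℂ))⁻¹ • ∑ᶠ σ ∈ CSet τ, SVec σ (nprod σ τ)

/-- `v^{adj}_τ = (2|N_τ|)^{-1/2} Σ_{σ∈N_τ} A_{σ,iσ·τ}`. -/
def vadjA {q : ℕ} (τ : Mat q) : BMat q :=
  ((Real.sqrt (2 * ((NSet τ).ncard : ℝ)) : ℂ))⁻¹ •
    ∑ᶠ σ ∈ NSet τ, AVec σ (Complex.I • nprod σ τ)

/-- The symmetric adjoint sector `V_[adj]`. -/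
def VadjS (q : ℕ) : Submodule ℂ (BMat q) :=
  Submodule.span ℂ {M | ∃ τ ∈ sigmaSet q, M = vadjS τ}

/-- The antisymmetric adjoint sector `V_{adj}`. -/
def VadjA (q : ℕ) : Submodule ℂ (BMat q) :=
  Submodule.span ℂ {M | ∃ τ ∈ sigmaSet q, M = vadjA τ}

/-- The orthogonal complement `V^⊥_{adj}` of `V_{adj}` inside `V_{A}`. -/
def VadjAperp (q : ℕ) : Submodule ℂ (BMat q) :=
  Submodule.span ℂ {v | v ∈ VAanti q ∧ ∀ w ∈ VadjA q, hs w v = 0}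

/-- `V_{1}^τ`. -/
def V1symτ (q : ℕ) (τ : Mat q) : Submodule ℂ (BMat q) :=
  Submodule.span ℂ {v | ∃ lam : Mat q → ℂ,
    v = ∑ᶠ σ ∈ NSet τ, lam σ • SVec σ (Complex.I • nprod σ τ) ∧
    ∀ ν ∈ NSet τ, (∑ᶠ σ ∈ NSet τ ∩ CSet ν, lam σ) - (∑ᶠ σ ∈ NSet τ ∩ NSet ν, lam σ)
      = ((2 ^ q : ℂ) / 2) * lam ν}

/-- `V_{2}^τ`. -/
def V2symτ (q : ℕ) (τ : Mat q) : Submodule ℂ (BMat q) :=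
  Submodule.span ℂ {v | ∃ lam : Mat q → ℂ,
    v = ∑ᶠ σ ∈ NSet τ, lam σ • SVec σ (Complex.I • nprod σ τ) ∧
    ∀ ν ∈ NSet τ, (∑ᶠ σ ∈ NSet τ ∩ CSet ν, lam σ) - (∑ᶠ σ ∈ NSet τ ∩ NSet ν, lam σ)
      = -((2 ^ q : ℂ) / 2) * lam ν}

/-- `V_{1} = ⊕_τ V_{1}^τ`. -/
def V1sym (q : ℕ) : Submodule ℂ (BMat q) := ⨆ τ ∈ sigmaSet q, V1symτ q τ

/-- `V_{2} = ⊕_τ V_{2}^τ`. -/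
def V2sym (q : ℕ) : Submodule ℂ (BMat q) := ⨆ τ ∈ sigmaSet q, V2symτ q τ

/-- The defining property of the map `Θ` on `V_[A]`. -/
def ThetaProp (q : ℕ) (Θ : BMat q →ₗ[ℂ] BMat q) : Prop :=
  ∀ τ ∈ sigmaSet q, ∀ σ ∈ CSet τ,
    Θ (AVec σ (nprod σ τ)) =
      (∑ᶠ σ' ∈ NSet τ ∩ CSet σ, AVec σ' (Complex.I • nprod σ' τ)) -
      ∑ᶠ σ' ∈ NSet τ ∩ NSet σ, AVec σ' (Complex.I • nprod σ' τ)

/-- `V` = span of off-diagonal products `σ⊗σ̂`, `σ ≠ σ̂`. -/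
def Voff (q : ℕ) : Submodule ℂ (BMat q) :=
  Submodule.span ℂ {M | ∃ σ ∈ sigmaSet q, ∃ σ' ∈ sigmaSet q, σ ≠ σ' ∧ M = σ ⊗ₖ σ'}

/-- `V^τ` = span of the `σ⊗σ̂` with `σ·σ̂ ∈ {τ, −τ, iτ, −iτ}`. -/
def Vtau (q : ℕ) (τ : Mat q) : Submodule ℂ (BMat q) :=
  Submodule.span ℂ {M | ∃ σ ∈ sigmaSet q, ∃ σ' ∈ sigmaSet q,
    (nprod σ σ' = τ ∨ nprod σ σ' = -τ ∨ nprod σ σ' = Complex.I • τ ∨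
      nprod σ σ' = -(Complex.I • τ)) ∧ M = σ ⊗ₖ σ'}

/-! The Clifford group acts transitively on the nonidentity Pauli operators: for anticommuting `P`,
`Q` the unitary `(P + Q) / √2` is Clifford and exchanges `P` and `Q`, and any two nonidentity Paulis
have a common anticommuting partner. Two Clifford unitaries that agree up to sign on `τ` differ by
an element of `𝒩_q^τ`, so the translate `φ⊗²(U) W^τ` depends only on `±UτU†`. Hence the sum of the
`W^{τ'}` over `τ' ∈ σ_q` is the sum of all translates of `W^τ`, which is visibly invariant. -/

section SignEq

/-- Equality up to sign. -/
def SignEq {α : Type*} [Neg α] (a b : α) : Prop := a = b ∨ a = -b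

infix:50 " =± " => SignEq

namespace SignEq

variable {α : Type*}

protected theorem refl [Neg α] (a : α) : a =± a := Or.inl rfl

protected theorem symm [InvolutiveNeg α] {a b : α} (h : a =± b) : b =± a :=
  h.imp Eq.symm fun h => by rw [h, neg_neg]

protected theorem trans [InvolutiveNeg α] {a b c : α} (hab : a =± b) (hbc : b =± c) : a =± c := by
  rcases hab with rfl | rfl <;> rcases hbc with rfl | rfl <;> simp [SignEq]

protected theorem mul [Mul α] [HasDistribNeg α] {a b c d : α} (hab : a =± b) (hcd : c =± d) :
    a * c =± b * d := by
  rcases hab with rfl | rfl <;> rcases hcd with rfl | rfl <;> simp [SignEq]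

theorem mul_mul [Mul α] [HasDistribNeg α] {a b : α} (h : a =± b) (c d : α) :
    c * a * d =± c * b * d :=
  ((SignEq.refl c).mul h).mul (.refl d)

theorem smul {R : Type*} [Monoid R] [AddGroup α] [DistribMulAction R α] {a b : α} (h : a =± b)
    (c : R) : c • a =± c • b := by
  rcases h with rfl | rfl <;> simp [SignEq]

theorem kronecker {m n p r R : Type*} [Mul R] [HasDistribNeg R] {A A' : Matrix m n R}
    {B B' : Matrix p r R} (hA : A =± A') (hB : B =± B') : A ⊗ₖ B =± A' ⊗ₖ B' := by
  rcases hA with rfl | rfl <;> rcases hB with rfl | rfl <;>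
    simp [SignEq, ← Matrix.ext_iff, Matrix.kroneckerMap_apply]

theorem mem_iff {S : Type*} [InvolutiveNeg α] [SetLike S α] [NegMemClass S α] {a b : α}
    (h : a =± b) {s : S} : a ∈ s ↔ b ∈ s := by
  rcases h with rfl | rfl <;> simp

end SignEq

theorem neg_one_pow_smul_signEq {R M : Type*} [Ring R] [AddCommGroup M] [Module R M] (k : ℕ)
    (x : M) : (-1 : R) ^ k • x =± x := by
  rcases neg_one_pow_eq_or R k with h | h <;> simp [h, SignEq]

end SignEq

section PiKronecker

variable {ι R : Type*} [Fintype ι] {n : ι → Type*} [CommSemiring R]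

/-- The Kronecker product of a finite family of square matrices, indexed by tuples of indices. -/
def piKronecker (A : ∀ i, Matrix (n i) (n i) R) : Matrix (∀ i, n i) (∀ i, n i) R :=
  Matrix.of fun x y => ∏ i, A i (x i) (y i)

theorem piKronecker_mul [DecidableEq ι] [∀ i, Fintype (n i)] (A B : ∀ i, Matrix (n i) (n i) R) :
    piKronecker A * piKronecker B = piKronecker fun i => A i * B i := by
  ext x y
  simp only [piKronecker, Matrix.mul_apply, Matrix.of_apply, Fintype.prod_sum,
    Finset.prod_mul_distrib]

theorem piKronecker_smul (c : ι → R) (A : ∀ i, Matrix (n i) (n i) R) :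
    (piKronecker fun i => c i • A i) = (∏ i, c i) • piKronecker A := by
  ext x y
  simp [piKronecker, Finset.prod_mul_distrib]

theorem piKronecker_one [∀ i, DecidableEq (n i)] :
    piKronecker (fun i => (1 : Matrix (n i) (n i) R)) = 1 := by
  ext x y
  simp [piKronecker, Matrix.one_apply, Finset.prod_ite_zero, funext_iff]

theorem conjTranspose_piKronecker [StarRing R] (A : ∀ i, Matrix (n i) (n i) R) :
    (piKronecker A)ᴴ = piKronecker fun i => (A i)ᴴ := by
  ext x y
  simp [piKronecker, Matrix.conjTranspose_apply]

end PiKronecker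

section Pauli

theorem conjTranspose_pauli1 (x : Fin 4) : (pauli1 x)ᴴ = pauli1 x := by
  fin_cases x <;> ext i j <;> fin_cases i <;> fin_cases j <;> simp [pauli1]

theorem pauli1_mul_self (x : Fin 4) : pauli1 x * pauli1 x = 1 := by
  fin_cases x <;> ext i j <;> fin_cases i <;> fin_cases j <;> simp [pauli1, Matrix.mul_apply]

/-- The exponents in `XY = iZ`, `YX = -iZ`, etc.; reading the labels `0, 1, 2, 3` in binary,
multiplication of Paulis adds them bitwise. -/
theorem exists_pauli1_mul_pauli1 (x y : Fin 4) :
    ∃ k : ℕ, pauli1 x * pauli1 y = Complex.I ^ k • pauli1 (x ^^^ y) := by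
  refine ⟨![![0, 0, 0, 0], ![0, 0, 1, 3], ![0, 3, 0, 1], ![0, 1, 3, 0]] x y, ?_⟩
  fin_cases x <;> fin_cases y <;> ext i j <;> fin_cases i <;> fin_cases j <;>
    simp [pauli1, Matrix.mul_apply]

theorem exists_pauli1_anticommute {x : Fin 4} (hx : x ≠ 0) :
    ∃ z, pauli1 z * pauli1 x = -(pauli1 x * pauli1 z) := by
  refine ⟨![0, 3, 1, 1] x, ?_⟩
  fin_cases x
  · exact absurd rfl hx
  all_goals ext i j; fin_cases i <;> fin_cases j <;> simp [pauli1, Matrix.mul_apply]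

variable {q : ℕ}

theorem PauliOp_eq_piKronecker (a : Fin q → Fin 4) :
    PauliOp a = piKronecker fun i => pauli1 (a i) := rfl

theorem PauliOp_zero : PauliOp (0 : Fin q → Fin 4) = 1 := by
  rw [PauliOp_eq_piKronecker, ← piKronecker_one]
  rfl

theorem isHermitian_PauliOp (a : Fin q → Fin 4) : (PauliOp a).IsHermitian := by
  simp only [Matrix.IsHermitian, PauliOp_eq_piKronecker, conjTranspose_piKronecker,
    conjTranspose_pauli1]

theorem PauliOp_mul_self (a : Fin q → Fin 4) : PauliOp a * PauliOp a = 1 := by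
  simp only [PauliOp_eq_piKronecker, piKronecker_mul, pauli1_mul_self, piKronecker_one]

theorem PauliOp_ne_zero (a : Fin q → Fin 4) : PauliOp a ≠ 0 :=
  left_ne_zero_of_mul_eq_one (PauliOp_mul_self a)

theorem conjTranspose_I_pow_smul_PauliOp (k : ℕ) (a : Fin q → Fin 4) :
    (Complex.I ^ k • PauliOp a)ᴴ = (-1 : ℂ) ^ k • Complex.I ^ k • PauliOp a := by
  rw [Matrix.conjTranspose_smul, isHermitian_PauliOp, star_pow, Complex.star_def, Complex.conj_I,
    neg_pow, mul_smul]

theorem exists_PauliOp_mul_PauliOp (a b : Fin q → Fin 4) :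
    ∃ (k : ℕ) (c : Fin q → Fin 4), PauliOp a * PauliOp b = Complex.I ^ k • PauliOp c := by
  choose k hk using fun i => exists_pauli1_mul_pauli1 (a i) (b i)
  refine ⟨∑ i, k i, fun i => a i ^^^ b i, ?_⟩
  simp only [PauliOp_eq_piKronecker, piKronecker_mul, hk, piKronecker_smul,
    Finset.prod_pow_eq_pow_sum]

/-- `QP` is the adjoint of `PQ = iᵏ R`, which is `±iᵏ R`. -/
theorem PauliOp_mul_comm_signEq (a b : Fin q → Fin 4) :
    PauliOp a * PauliOp b =± PauliOp b * PauliOp a := by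
  obtain ⟨k, c, hc⟩ := exists_PauliOp_mul_PauliOp a b
  have hba : PauliOp b * PauliOp a = (PauliOp a * PauliOp b)ᴴ := by
    rw [Matrix.conjTranspose_mul, isHermitian_PauliOp, isHermitian_PauliOp]
  rw [hba, hc, conjTranspose_I_pow_smul_PauliOp]
  exact (neg_one_pow_smul_signEq k _).symm

theorem exists_PauliOp_anticommute {a : Fin q → Fin 4} (ha : a ≠ 0) :
    ∃ r, PauliOp r * PauliOp a = -(PauliOp a * PauliOp r) := by
  obtain ⟨i, hi⟩ := Function.ne_iff.1 ha
  obtain ⟨z, hz⟩ := exists_pauli1_anticommute hi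
  have hsite (j : Fin q) : pauli1 (Pi.single (M := fun _ => Fin 4) i z j) * pauli1 (a j) =
      Pi.mulSingle (M := fun _ => ℂ) i (-1) j •
        (pauli1 (a j) * pauli1 (Pi.single (M := fun _ => Fin 4) i z j)) := by
    rcases eq_or_ne j i with rfl | hj
    · simpa using hz
    · simp [hj, pauli1]
  refine ⟨Pi.single i z, ?_⟩
  simp only [PauliOp_eq_piKronecker, piKronecker_mul, hsite, piKronecker_smul]
  simp

/-- If partners `r` of `a` and `s` of `b` both fail for the other label, then `r` commutes with `b`
and `s` with `a`, so their product works for both. -/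
theorem exists_PauliOp_anticommute_both {a b : Fin q → Fin 4} (ha : a ≠ 0) (hb : b ≠ 0) :
    ∃ r, PauliOp r * PauliOp a = -(PauliOp a * PauliOp r) ∧
      PauliOp r * PauliOp b = -(PauliOp b * PauliOp r) := by
  obtain ⟨r, hra⟩ := exists_PauliOp_anticommute ha
  obtain ⟨s, hsb⟩ := exists_PauliOp_anticommute hb
  obtain hrb | hrb := (PauliOp_mul_comm_signEq r b).symm
  swap
  · exact ⟨r, hra, by rw [hrb, neg_neg]⟩
  obtain hsa | hsa := (PauliOp_mul_comm_signEq s a).symm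
  swap
  · exact ⟨s, by rw [hsa, neg_neg], hsb⟩
  obtain ⟨k, c, hc⟩ := exists_PauliOp_mul_PauliOp r s
  have anticommute_of_mul {d : Fin q → Fin 4}
      (h : PauliOp r * PauliOp s * PauliOp d = -(PauliOp d * (PauliOp r * PauliOp s))) :
      PauliOp c * PauliOp d = -(PauliOp d * PauliOp c) := by
    rw [hc, Matrix.smul_mul, Matrix.mul_smul, ← smul_neg] at h
    exact smul_right_injective _ (pow_ne_zero k Complex.I_ne_zero) h
  refine ⟨c, anticommute_of_mul ?_, anticommute_of_mul ?_⟩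
  · rw [Matrix.mul_assoc, ← hsa, ← Matrix.mul_assoc, hra, Matrix.neg_mul, Matrix.mul_assoc]
  · rw [Matrix.mul_assoc, hsb, Matrix.mul_neg, ← Matrix.mul_assoc, ← hrb, Matrix.mul_assoc]

theorem PauliOp_ne_neg_self (a : Fin q → Fin 4) : PauliOp a ≠ -PauliOp a := by
  have : IsAddTorsionFree (Mat q) := .of_module_rat _
  exact fun h => PauliOp_ne_zero a (self_eq_neg.1 h)

theorem PauliOp_signEq_one_iff {a : Fin q → Fin 4} : PauliOp a =± 1 ↔ a = 0 := by
  refine ⟨fun h => ?_, fun h => Or.inl (h ▸ PauliOp_zero)⟩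
  by_contra ha
  obtain ⟨r, hr⟩ := exists_PauliOp_anticommute ha
  apply PauliOp_ne_neg_self r
  rcases h with h | h <;> simpa [h, eq_comm] using hr

end Pauli

section PauliGroup

/-- The Pauli group, consisting of the operators `iᵏ P` with `P` a Pauli operator. It is bundled as
a submonoid of the matrices since its inverses are never needed. -/
def pauliGroup (q : ℕ) : Submonoid (Mat q) where
  carrier := {M | ∃ (k : ℕ) (a : Fin q → Fin 4), M = Complex.I ^ k • PauliOp a}
  one_mem' := ⟨0, 0, by rw [PauliOp_zero, pow_zero, one_smul]⟩
  mul_mem' := by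
    rintro _ _ ⟨k, a, rfl⟩ ⟨l, b, rfl⟩
    obtain ⟨m, c, hc⟩ := exists_PauliOp_mul_PauliOp a b
    refine ⟨k + l + m, c, ?_⟩
    rw [Matrix.smul_mul, Matrix.mul_smul, hc, smul_smul, smul_smul, pow_add, pow_add]

variable {q : ℕ}

theorem PauliOp_mem_pauliGroup (a : Fin q → Fin 4) : PauliOp a ∈ pauliGroup q :=
  ⟨0, a, by rw [pow_zero, one_smul]⟩

theorem I_pow_smul_mem_pauliGroup (k : ℕ) {M : Mat q} (hM : M ∈ pauliGroup q) :
    Complex.I ^ k • M ∈ pauliGroup q := by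
  obtain ⟨l, a, rfl⟩ := hM
  exact ⟨k + l, a, by rw [smul_smul, pow_add]⟩

theorem neg_mem_pauliGroup {M : Mat q} (hM : M ∈ pauliGroup q) : -M ∈ pauliGroup q := by
  simpa using I_pow_smul_mem_pauliGroup 2 hM

theorem pauliGroup_finite (q : ℕ) : (pauliGroup q : Set (Mat q)).Finite := by
  refine (Set.finite_range fun p : Fin 4 × (Fin q → Fin 4) =>
    Complex.I ^ (p.1 : ℕ) • PauliOp p.2).subset ?_
  rintro _ ⟨k, a, rfl⟩
  exact ⟨(⟨k % 4, Nat.mod_lt k four_pos⟩, a), by rw [Complex.I_pow_eq_pow_mod k]⟩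

theorem exists_signEq_PauliOp {M : Mat q} (hM : M ∈ pauliGroup q) (hMH : M.IsHermitian) :
    ∃ a, M =± PauliOp a := by
  obtain ⟨k, a, rfl⟩ := hM
  refine ⟨a, ?_⟩
  obtain ⟨m, rfl | rfl⟩ := k.even_or_odd'
  · rw [pow_mul, Complex.I_sq]
    exact neg_one_pow_smul_signEq m _
  · have hneg : Complex.I ^ (2 * m + 1) • PauliOp a = Complex.I ^ (2 * m + 1) • -PauliOp a := by
      rw [smul_neg, ← neg_one_smul ℂ, ← (odd_two_mul_add_one m).neg_one_pow,
        ← conjTranspose_I_pow_smul_PauliOp, hMH]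
    exact absurd (smul_right_injective _ (pow_ne_zero _ Complex.I_ne_zero) hneg)
      (PauliOp_ne_neg_self a)

end PauliGroup

section Conjugation

variable {n R : Type*} [Fintype n] [Semiring R] [StarRing R]

theorem mul_conj_conjTranspose (U V A : Matrix n n R) :
    U * V * A * (U * V)ᴴ = U * (V * A * Vᴴ) * Uᴴ := by
  simp only [Matrix.conjTranspose_mul, Matrix.mul_assoc]

variable [DecidableEq n] {U : Matrix n n R}

theorem conjTranspose_conj_cancel (hU : Uᴴ * U = 1) (A : Matrix n n R) :
    Uᴴ * (U * A * Uᴴ) * U = A := by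
  calc Uᴴ * (U * A * Uᴴ) * U = Uᴴ * U * A * (Uᴴ * U) := by simp only [Matrix.mul_assoc]
    _ = A := by rw [hU, Matrix.one_mul, Matrix.mul_one]

theorem conj_mul_conj (hU : Uᴴ * U = 1) (A B : Matrix n n R) :
    U * A * Uᴴ * (U * B * Uᴴ) = U * (A * B) * Uᴴ := by
  calc U * A * Uᴴ * (U * B * Uᴴ) = U * A * (Uᴴ * U) * B * Uᴴ := by simp only [Matrix.mul_assoc]
    _ = U * (A * B) * Uᴴ := by rw [hU, Matrix.mul_one, Matrix.mul_assoc U]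

theorem SignEq.of_conj {R : Type*} [Ring R] [StarRing R] {U A B : Matrix n n R} (hU : Uᴴ * U = 1)
    (h : U * A * Uᴴ =± U * B * Uᴴ) : A =± B := by
  simpa only [conjTranspose_conj_cancel hU] using h.mul_mul Uᴴ U

end Conjugation

section Clifford

variable {q : ℕ} {U V : Mat q}

theorem sqrtd_ne_zero (q : ℕ) : sqrtd q ≠ 0 :=
  Complex.ofReal_ne_zero.2 (Real.sqrt_pos.2 (by positivity)).ne'

theorem conjTranspose_mul_self_of_mem_Cliff (hU : U ∈ Cliff q) : Uᴴ * U = 1 :=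
  Matrix.mem_unitaryGroup_iff'.1 hU.1

theorem mul_conjTranspose_self_of_mem_Cliff (hU : U ∈ Cliff q) : U * Uᴴ = 1 :=
  Matrix.mem_unitaryGroup_iff.1 hU.1

theorem mem_Cliff_iff :
    U ∈ Cliff q ↔
      U ∈ Matrix.unitaryGroup (Idx q) ℂ ∧ ∀ M ∈ pauliGroup q, U * M * Uᴴ ∈ pauliGroup q := by
  refine and_congr_right fun _ => ⟨?_, ?_⟩
  · rintro h _ ⟨k, a, rfl⟩
    obtain ⟨_, ⟨b, rfl⟩, hb⟩ := h _ ⟨a, rfl⟩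
    have hb' : U * PauliOp a * Uᴴ =± PauliOp b := by
      simpa [smul_smul, sqrtd_ne_zero] using SignEq.smul hb (sqrtd q)
    rw [Matrix.mul_smul, Matrix.smul_mul]
    apply I_pow_smul_mem_pauliGroup
    rcases hb' with hb' | hb' <;> rw [hb']
    exacts [PauliOp_mem_pauliGroup b, neg_mem_pauliGroup (PauliOp_mem_pauliGroup b)]
  · rintro h _ ⟨a, rfl⟩
    obtain ⟨b, hb⟩ := exists_signEq_PauliOp (h _ (PauliOp_mem_pauliGroup a))
      (Matrix.isHermitian_mul_mul_conjTranspose U (isHermitian_PauliOp a))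
    refine ⟨_, ⟨b, rfl⟩, ?_⟩
    rw [Matrix.mul_smul, Matrix.smul_mul]
    exact hb.smul _

theorem mul_mem_Cliff (hU : U ∈ Cliff q) (hV : V ∈ Cliff q) : U * V ∈ Cliff q := by
  rw [mem_Cliff_iff] at hU hV ⊢
  refine ⟨mul_mem hU.1 hV.1, fun M hM => ?_⟩
  rw [mul_conj_conjTranspose]
  exact hU.2 _ (hV.2 M hM)

/-- Conjugation by `U` is an injection of the finite Pauli group into itself, hence a bijection. -/
theorem conjTranspose_mem_Cliff (hU : U ∈ Cliff q) : Uᴴ ∈ Cliff q := by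
  have hcancel := conjTranspose_conj_cancel (conjTranspose_mul_self_of_mem_Cliff hU)
  obtain ⟨hunit, hmaps⟩ := mem_Cliff_iff.1 hU
  have hbij : Set.BijOn (fun M => U * M * Uᴴ) (pauliGroup q) (pauliGroup q) :=
    ((pauliGroup_finite q).injOn_iff_bijOn_of_mapsTo hmaps).1
      (Function.LeftInverse.injective (g := fun M => Uᴴ * M * U) hcancel).injOn
  refine mem_Cliff_iff.2 ⟨Unitary.star_mem hunit, fun M hM => ?_⟩
  obtain ⟨N, hN, rfl⟩ := hbij.surjOn hM
  rwa [Matrix.conjTranspose_conjTranspose, hcancel]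

theorem mem_sigmaSet_iff_not_signEq {σ : Mat q} :
    σ ∈ sigmaSet q ↔ σ ∈ sigmaHat q ∧ ¬ σ =± sigma0 q := by
  refine and_congr_right ?_
  rintro ⟨a, rfl⟩
  refine not_congr ⟨Or.inl, fun h => ?_⟩
  have h1 : PauliOp a =± 1 := by
    simpa [sigma0, smul_smul, sqrtd_ne_zero] using h.smul (sqrtd q)
  rw [PauliOp_signEq_one_iff.1 h1, PauliOp_zero]
  rfl

theorem exists_ne_zero_of_mem_sigmaSet {σ : Mat q} (hσ : σ ∈ sigmaSet q) :
    ∃ a : Fin q → Fin 4, a ≠ 0 ∧ σ = (sqrtd q)⁻¹ • PauliOp a := by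
  obtain ⟨⟨a, rfl⟩, hσ0⟩ := hσ
  refine ⟨a, fun ha => hσ0 ?_, rfl⟩
  rw [ha, PauliOp_zero]
  rfl

theorem exists_signEq_conj_of_mem_sigmaSet (hU : U ∈ Cliff q) {σ : Mat q} (hσ : σ ∈ sigmaSet q) :
    ∃ τ ∈ sigmaSet q, U * σ * Uᴴ =± τ := by
  rw [mem_sigmaSet_iff_not_signEq] at hσ
  obtain ⟨τ, hτ, h⟩ := hU.2 σ hσ.1
  refine ⟨τ, mem_sigmaSet_iff_not_signEq.2 ⟨hτ, fun hτ0 => hσ.2 ?_⟩, h⟩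
  have hfix : U * sigma0 q * Uᴴ = sigma0 q := by
    rw [sigma0, Matrix.mul_smul, Matrix.smul_mul, Matrix.mul_one,
      mul_conjTranspose_self_of_mem_Cliff hU]
  exact .of_conj (conjTranspose_mul_self_of_mem_Cliff hU) (hfix.symm ▸ SignEq.trans h hτ0)

end Clifford

section GenHadamard

variable {n : Type*} {P Q R : Matrix n n ℂ}

/-- The generalized Hadamard gate `(P + Q) / √2`, which exchanges `P` and `Q` under conjugation when
these are anticommuting Hermitian involutions; `P = X`, `Q = Z` gives the Hadamard gate. -/
def genHadamard (P Q : Matrix n n ℂ) : Matrix n n ℂ := ((Real.sqrt 2 : ℝ) : ℂ)⁻¹ • (P + Q)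

theorem isHermitian_genHadamard (hP : P.IsHermitian) (hQ : Q.IsHermitian) :
    (genHadamard P Q).IsHermitian := by
  simp [Matrix.IsHermitian, genHadamard, Matrix.conjTranspose_smul, hP.eq, hQ.eq]

variable [Fintype n] [DecidableEq n]

theorem genHadamard_conj (hP : P * P = 1) (hQ : Q * Q = 1) (hPQ : P * Q = -(Q * P)) {s t : ℂ}
    (hPR : P * R = s • (R * P)) (hQR : Q * R = t • (R * Q)) :
    genHadamard P Q * R * genHadamard P Q =
      ((s + t) / 2) • R + ((s - t) / 2) • (R * (P * Q)) := by
  have hsqrt : ((Real.sqrt 2 : ℝ) : ℂ)⁻¹ * ((Real.sqrt 2 : ℝ) : ℂ)⁻¹ = 2⁻¹ := by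
    rw [← mul_inv, ← Complex.ofReal_mul, Real.mul_self_sqrt zero_le_two, Complex.ofReal_ofNat]
  have hQP : Q * P = -(P * Q) := by rw [hPQ, neg_neg]
  have hexpand : (P + Q) * R * (P + Q) = (s + t) • R + (s - t) • (R * (P * Q)) := by
    simp only [Matrix.add_mul, Matrix.mul_add, hPR, hQR, Matrix.smul_mul, Matrix.mul_assoc, hP, hQ,
      hQP, Matrix.mul_one, Matrix.mul_neg]
    module
  simp only [genHadamard, Matrix.smul_mul, Matrix.mul_smul, smul_smul, hsqrt, hexpand]
  module

theorem genHadamard_mul_self (hP : P * P = 1) (hQ : Q * Q = 1) (hPQ : P * Q = -(Q * P)) :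
    genHadamard P Q * genHadamard P Q = 1 := by
  simpa using genHadamard_conj (R := 1) (s := 1) (t := 1) hP hQ hPQ (by simp) (by simp)

theorem genHadamard_conj_left (hP : P * P = 1) (hQ : Q * Q = 1) (hPQ : P * Q = -(Q * P)) :
    genHadamard P Q * P * genHadamard P Q = Q := by
  simpa [← Matrix.mul_assoc, hP] using
    genHadamard_conj (R := P) (s := 1) (t := -1) hP hQ hPQ (by simp) (by simp [hPQ])

variable {q : ℕ} {a b : Fin q → Fin 4}

theorem genHadamard_PauliOp_mem_Cliff
    (hab : PauliOp a * PauliOp b = -(PauliOp b * PauliOp a)) :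
    genHadamard (PauliOp a) (PauliOp b) ∈ Cliff q := by
  have hherm := isHermitian_genHadamard (isHermitian_PauliOp a) (isHermitian_PauliOp b)
  have ha := PauliOp_mul_self a
  have hb := PauliOp_mul_self b
  rw [mem_Cliff_iff, Matrix.mem_unitaryGroup_iff, Matrix.star_eq_conjTranspose, hherm.eq]
  refine ⟨genHadamard_mul_self ha hb hab, ?_⟩
  rintro _ ⟨k, c, rfl⟩
  rw [Matrix.mul_smul, Matrix.smul_mul]
  apply I_pow_smul_mem_pauliGroup
  have hc := PauliOp_mem_pauliGroup c
  have hcab := mul_mem hc (mul_mem (PauliOp_mem_pauliGroup a) (PauliOp_mem_pauliGroup b))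
  have comm_sign (d : Fin q → Fin 4) : ∃ s : ℂ, (s = 1 ∨ s = -1) ∧
      PauliOp d * PauliOp c = s • (PauliOp c * PauliOp d) := by
    simpa [or_and_right, exists_or, SignEq] using PauliOp_mul_comm_signEq d c
  obtain ⟨s, hs, hac⟩ := comm_sign a
  obtain ⟨t, ht, hbc⟩ := comm_sign b
  rw [genHadamard_conj ha hb hab hac hbc]
  rcases hs with rfl | rfl <;> rcases ht with rfl | rfl <;>
    norm_num [hc, hcab, neg_mem_pauliGroup hc, neg_mem_pauliGroup hcab]

theorem exists_mem_Cliff_conj_PauliOp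
    (hab : PauliOp a * PauliOp b = -(PauliOp b * PauliOp a)) :
    ∃ U ∈ Cliff q, U * PauliOp a * Uᴴ = PauliOp b := by
  refine ⟨_, genHadamard_PauliOp_mem_Cliff hab, ?_⟩
  rw [isHermitian_genHadamard (isHermitian_PauliOp a) (isHermitian_PauliOp b),
    genHadamard_conj_left (PauliOp_mul_self a) (PauliOp_mul_self b) hab]

theorem exists_mem_Cliff_conj_eq {τ τ' : Mat q} (hτ : τ ∈ sigmaSet q) (hτ' : τ' ∈ sigmaSet q) :
    ∃ U ∈ Cliff q, U * τ * Uᴴ = τ' := by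
  obtain ⟨a, ha, rfl⟩ := exists_ne_zero_of_mem_sigmaSet hτ
  obtain ⟨b, hb, rfl⟩ := exists_ne_zero_of_mem_sigmaSet hτ'
  obtain ⟨r, hra, hrb⟩ := exists_PauliOp_anticommute_both ha hb
  obtain ⟨U, hU, hUa⟩ := exists_mem_Cliff_conj_PauliOp (neg_eq_iff_eq_neg.1 hra.symm)
  obtain ⟨V, hV, hVr⟩ := exists_mem_Cliff_conj_PauliOp hrb
  refine ⟨V * U, mul_mem_Cliff hV hU, ?_⟩
  rw [Matrix.mul_smul, Matrix.smul_mul, mul_conj_conjTranspose, hUa, hVr]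

end GenHadamard

section TwoCopy

variable {q : ℕ}

theorem twoCopy_mul (U V : Mat q) : twoCopy (U * V) = twoCopy U ∘ₗ twoCopy V := by
  ext1 M
  change (U * V) ⊗ₖ (U * V) * M * ((U * V) ⊗ₖ (U * V))ᴴ =
    U ⊗ₖ U * (V ⊗ₖ V * M * (V ⊗ₖ V)ᴴ) * (U ⊗ₖ U)ᴴ
  rw [Matrix.mul_kronecker_mul, mul_conj_conjTranspose]

theorem twoCopy_kronecker (U A B : Mat q) :
    twoCopy U (A ⊗ₖ B) = (U * A * Uᴴ) ⊗ₖ (U * B * Uᴴ) := by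
  change U ⊗ₖ U * A ⊗ₖ B * (U ⊗ₖ U)ᴴ = _
  rw [Matrix.conjTranspose_kronecker, Matrix.mul_kronecker_mul, Matrix.mul_kronecker_mul]

theorem nprod_conj {U : Mat q} (hU : Uᴴ * U = 1) (A B : Mat q) :
    nprod (U * A * Uᴴ) (U * B * Uᴴ) = U * nprod A B * Uᴴ := by
  rw [nprod, nprod, conj_mul_conj hU, Matrix.mul_smul, Matrix.smul_mul]

theorem nprod_signEq_nprod {A A' B B' : Mat q} (hA : A =± A') (hB : B =± B') :
    nprod A B =± nprod A' B' :=
  (hA.mul hB).smul _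

theorem Vtau_eq_span (τ : Mat q) :
    Vtau q τ = Submodule.span ℂ {M | ∃ σ ∈ sigmaSet q, ∃ σ' ∈ sigmaSet q,
      (nprod σ σ' =± τ ∨ nprod σ σ' =± Complex.I • τ) ∧ M = σ ⊗ₖ σ'} := by
  simp only [Vtau, SignEq, or_assoc]

theorem map_twoCopy_Vtau_le {U τ τ' : Mat q} (hU : U ∈ Cliff q) (h : U * τ * Uᴴ =± τ') :
    (Vtau q τ).map (twoCopy U) ≤ Vtau q τ' := by
  rw [Vtau_eq_span τ, Submodule.map_span_le]
  rintro _ ⟨σ, hσ, σ', hσ', hprod, rfl⟩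
  obtain ⟨ρ, hρ, hσρ⟩ := exists_signEq_conj_of_mem_sigmaSet hU hσ
  obtain ⟨ρ', hρ', hσρ'⟩ := exists_signEq_conj_of_mem_sigmaSet hU hσ'
  have hρρ' {υ : Mat q} (hυ : nprod σ σ' =± υ) : nprod ρ ρ' =± U * υ * Uᴴ := by
    refine .trans ?_ (hυ.mul_mul U Uᴴ)
    rw [← nprod_conj (conjTranspose_mul_self_of_mem_Cliff hU)]
    exact nprod_signEq_nprod hσρ.symm hσρ'.symm
  have hI : U * Complex.I • τ * Uᴴ =± Complex.I • τ' := by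
    rw [Matrix.mul_smul, Matrix.smul_mul]
    exact h.smul _
  rw [twoCopy_kronecker, (hσρ.kronecker hσρ').mem_iff, Vtau_eq_span]
  exact Submodule.subset_span ⟨ρ, hρ, ρ', hρ',
    hprod.imp (fun hp => (hρρ' hp).trans h) (fun hp => (hρρ' hp).trans hI), rfl⟩

end TwoCopy

section Translates

variable {q : ℕ} {τ : Mat q} {W : Submodule ℂ (BMat q)}

theorem map_twoCopy_le_of_signEq
    (hW : ∀ U ∈ Cliff q, U * τ * Uᴴ =± τ → W ≤ W.comap (twoCopy U)) {U₁ U₂ : Mat q}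
    (h₁ : U₁ ∈ Cliff q) (h₂ : U₂ ∈ Cliff q) (h : U₁ * τ * U₁ᴴ =± U₂ * τ * U₂ᴴ) :
    W.map (twoCopy U₁) ≤ W.map (twoCopy U₂) := by
  have hstab : U₂ᴴ * U₁ * τ * (U₂ᴴ * U₁)ᴴ =± τ := by
    have h' := h.mul_mul U₂ᴴ U₂
    rw [conjTranspose_conj_cancel (conjTranspose_mul_self_of_mem_Cliff h₂)] at h'
    rwa [mul_conj_conjTranspose, Matrix.conjTranspose_conjTranspose]
  have hU₁ : U₁ = U₂ * (U₂ᴴ * U₁) := by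
    rw [← Matrix.mul_assoc, mul_conjTranspose_self_of_mem_Cliff h₂, Matrix.one_mul]
  rw [hU₁, twoCopy_mul, Submodule.map_comp]
  exact Submodule.map_mono <| Submodule.map_le_iff_le_comap.2 <|
    hW _ (mul_mem_Cliff (conjTranspose_mem_Cliff h₂) h₁) hstab

theorem map_twoCopy_eq_of_signEq
    (hW : ∀ U ∈ Cliff q, U * τ * Uᴴ =± τ → W ≤ W.comap (twoCopy U)) {U₁ U₂ : Mat q}
    (h₁ : U₁ ∈ Cliff q) (h₂ : U₂ ∈ Cliff q) (h : U₁ * τ * U₁ᴴ =± U₂ * τ * U₂ᴴ) :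
    W.map (twoCopy U₁) = W.map (twoCopy U₂) :=
  (map_twoCopy_le_of_signEq hW h₁ h₂ h).antisymm (map_twoCopy_le_of_signEq hW h₂ h₁ h.symm)

theorem isInvariant_iff_map_le :
    IsInvariant q W ↔ ∀ U ∈ Cliff q, W.map (twoCopy U) ≤ W :=
  forall₂_congr fun _ _ => Submodule.map_le_iff_le_comap.symm

theorem isInvariant_iSup_map_twoCopy (W : Submodule ℂ (BMat q)) :
    IsInvariant q (⨆ U ∈ Cliff q, W.map (twoCopy U)) := by
  refine isInvariant_iff_map_le.2 fun U hU => ?_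
  simp only [Submodule.map_iSup, ← Submodule.map_comp, ← twoCopy_mul]
  exact iSup₂_le fun V hV => le_biSup (fun V => W.map (twoCopy V)) (mul_mem_Cliff hU hV)

theorem iSup_sigmaSet_eq_iSup_map_twoCopy (hτ : τ ∈ sigmaSet q)
    (hW : ∀ U ∈ Cliff q, U * τ * Uᴴ =± τ → W ≤ W.comap (twoCopy U))
    {W' : Mat q → Submodule ℂ (BMat q)}
    (hW' : ∀ τ' ∈ sigmaSet q,
      ∃ U ∈ Cliff q, U * τ * Uᴴ =± τ' ∧ W' τ' = W.map (twoCopy U)) :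
    ⨆ τ' ∈ sigmaSet q, W' τ' = ⨆ U ∈ Cliff q, W.map (twoCopy U) := by
  refine le_antisymm (iSup₂_le fun τ' hτ' => ?_) (iSup₂_le fun V hV => ?_)
  · obtain ⟨U, hU, -, hWU⟩ := hW' τ' hτ'
    rw [hWU]
    exact le_biSup (fun U => W.map (twoCopy U)) hU
  · obtain ⟨τ', hτ', hVτ⟩ := exists_signEq_conj_of_mem_sigmaSet hV hτ
    obtain ⟨U, hU, hUτ, hWU⟩ := hW' τ' hτ'
    rw [map_twoCopy_eq_of_signEq hW hV hU (hVτ.trans hUτ.symm), ← hWU]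
    exact le_biSup W' hτ'

end Translates

/-- space reduction: from a `𝒩_q^τ`-invariant subspace `W^τ ⊆ V^τ`
one obtains well-defined translated spaces `W^{τ′} ⊆ V^{τ′}` whose direct sum is
invariant under the full two-copy representation. -/
theorem statement13 (q : ℕ) (hq : 1 ≤ q) (τ : Mat q) (hτ : τ ∈ sigmaSet q)
    (W : Submodule ℂ (BMat q)) (hW : W ≤ Vtau q τ)
    (hWinv : ∀ U ∈ Cliff q, (U * τ * Uᴴ = τ ∨ U * τ * Uᴴ = -τ) →
      ∀ v ∈ W, twoCopy U v ∈ W) :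
    (∀ U₁ ∈ Cliff q, ∀ U₂ ∈ Cliff q,
      (U₁ * τ * U₁ᴴ = U₂ * τ * U₂ᴴ ∨ U₁ * τ * U₁ᴴ = -(U₂ * τ * U₂ᴴ)) →
      Submodule.map (twoCopy U₁) W = Submodule.map (twoCopy U₂) W) ∧
    (∀ τ' ∈ sigmaSet q, ∃ U ∈ Cliff q,
      (U * τ * Uᴴ = τ' ∨ U * τ * Uᴴ = -τ') ∧
      Submodule.map (twoCopy U) W ≤ Vtau q τ') ∧
    (∀ W' : Mat q → Submodule ℂ (BMat q),
      (∀ τ' ∈ sigmaSet q, ∃ U ∈ Cliff q,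
        (U * τ * Uᴴ = τ' ∨ U * τ * Uᴴ = -τ') ∧
        W' τ' = Submodule.map (twoCopy U) W) →
      IsInvariant q (⨆ τ' ∈ sigmaSet q, W' τ')) := by
  refine ⟨fun U₁ h₁ U₂ h₂ h => map_twoCopy_eq_of_signEq hWinv h₁ h₂ h, fun τ' hτ' => ?_,
    fun W' hW' => ?_⟩
  · obtain ⟨U, hU, hUτ⟩ := exists_mem_Cliff_conj_eq hτ hτ'
    exact ⟨U, hU, .inl hUτ, (Submodule.map_mono hW).trans (map_twoCopy_Vtau_le hU (.inl hUτ))⟩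
  · rw [iSup_sigmaSet_eq_iSup_map_twoCopy hτ hWinv hW']
    exact isInvariant_iSup_map_twoCopy W

end CliffordPaper
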